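/- Let μ be a nonzero, σ-finite, nonnegative Borel measure on (0,∞) such that ∫ exp(−ε·θ²/2) μ(dθ) < ∞ for every ε > 0, let b : (0,∞) → ℝ satisfy r_μ(t, b(t)) = 1 for every t ∈ (0,∞), and set θ* := inf{ θ ∈ (0,∞) : μ((0,θ]) > 0 }. Then b(t) tends to θ*/2 as t decreases to 0. -/

import Mathlib

/-!
Factoring the exponent gives `r_θ(t, x) = exp (θ * (2 * x - θ) / 2 * t⁻¹)`. As `t ↓ 0` this blows
up for `0 < θ < 2 * x` and vanishes for `θ > max 0 (2 * x)`, so `r_μ(t, x)` tends to `∞` or to `0`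
according as `2 * x` lies above or below `θ*`, the essential infimum of `μ`. Since `r_μ` is monotone
in `x`, any curve on which it keeps a fixed value in `(0, ∞)` is squeezed towards `θ* / 2`.
The limit `0` is by dominated convergence: finiteness of `r_μ` at one point `(t₀, x₀)` propagates to
all `(t, x)` with `t < t₀`, so that `r_θ(t₀ / 2, x)` is an integrable bound.
-/

open MeasureTheory Set Filter
open scoped ENNReal NNReal Topology

noncomputable def rTheta (θ t x : ℝ) : ℝ := Real.exp (-θ ^ 2 / (2 * t) + θ * x / t)

noncomputable def rMu (μ : Measure ℝ) (t x : ℝ) : ℝ≥0∞ :=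
  ∫⁻ θ, ENNReal.ofReal (rTheta θ t x) ∂μ

lemma rTheta_eq_exp (θ t x : ℝ) : rTheta θ t x = Real.exp (θ * (2 * x - θ) / 2 * t⁻¹) := by
  unfold rTheta
  ring_nf

@[fun_prop]
lemma measurable_rTheta (t x : ℝ) : Measurable fun θ => rTheta θ t x := by
  unfold rTheta
  fun_prop

lemma rTheta_mono_right {θ t x y : ℝ} (hθ : 0 ≤ θ) (ht : 0 ≤ t) (hxy : x ≤ y) :
    rTheta θ t x ≤ rTheta θ t y := by
  unfold rTheta
  gcongr

lemma rTheta_le_of_le_of_nonpos {θ s t x : ℝ} (hs : 0 < s) (hst : s ≤ t)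
    (hθ : θ * (2 * x - θ) ≤ 0) : rTheta θ s x ≤ rTheta θ t x := by
  rw [rTheta_eq_exp, rTheta_eq_exp, Real.exp_le_exp]
  exact mul_le_mul_of_nonpos_left (inv_anti₀ hs hst) (by linarith)

lemma tendsto_rTheta_zero {θ x : ℝ} (hθ : θ * (2 * x - θ) < 0) :
    Tendsto (fun t => rTheta θ t x) (𝓝[>] 0) (𝓝 0) := by
  simp only [rTheta_eq_exp]
  exact Real.tendsto_exp_atBot.comp
    (tendsto_inv_nhdsGT_zero.const_mul_atTop_of_neg (by linarith))

lemma mul_sub_mul_sq_le {K : Type*} [Field K] [LinearOrder K] [IsStrictOrderedRing K] {a : K}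
    (ha : 0 < a) (b x : K) : b * x - a * x ^ 2 ≤ b ^ 2 / (4 * a) := by
  rw [le_div_iff₀ (by positivity)]
  linarith [sq_nonneg (2 * a * x - b)]

lemma exists_rTheta_le_mul {t t₀ : ℝ} (ht : 0 < t) (htt₀ : t < t₀) (x x₀ : ℝ) :
    ∃ C : ℝ, 0 ≤ C ∧ ∀ θ, rTheta θ t x ≤ C * rTheta θ t₀ x₀ := by
  set a := (t⁻¹ - t₀⁻¹) / 2
  set b := x * t⁻¹ - x₀ * t₀⁻¹
  have ha : 0 < a := half_pos (sub_pos.2 (inv_strictAnti₀ ht htt₀))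
  refine ⟨Real.exp (b ^ 2 / (4 * a)), (Real.exp_pos _).le, fun θ => ?_⟩
  rw [rTheta_eq_exp, rTheta_eq_exp, ← Real.exp_add, Real.exp_le_exp]
  have hdiff : θ * (2 * x - θ) / 2 * t⁻¹ - θ * (2 * x₀ - θ) / 2 * t₀⁻¹ = b * θ - a * θ ^ 2 := by
    ring
  linarith [mul_sub_mul_sq_le ha b θ]

section rMu

variable {μ : Measure ℝ} {t t₀ x₀ : ℝ}

lemma rMu_mono (hμ : ∀ᵐ θ ∂μ, 0 < θ) (ht : 0 ≤ t) : Monotone (rMu μ t) := fun _ _ hxy =>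
  lintegral_mono_ae <| hμ.mono fun _ hθ => ENNReal.ofReal_le_ofReal (rTheta_mono_right hθ.le ht hxy)

lemma rMu_ne_top_of_lt (ht : 0 < t) (htt₀ : t < t₀) (hfin : rMu μ t₀ x₀ ≠ ⊤) (x : ℝ) :
    rMu μ t x ≠ ⊤ := by
  obtain ⟨C, hC, hle⟩ := exists_rTheta_le_mul ht htt₀ x x₀
  refine ne_top_of_le_ne_top (ENNReal.mul_ne_top (ENNReal.ofReal_ne_top (r := C)) hfin) ?_
  calc rMu μ t x
      ≤ ∫⁻ θ, ENNReal.ofReal C * ENNReal.ofReal (rTheta θ t₀ x₀) ∂μ :=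
        lintegral_mono fun θ => by
          simpa only [ENNReal.ofReal_mul hC] using ENNReal.ofReal_le_ofReal (hle θ)
    _ = ENNReal.ofReal C * rMu μ t₀ x₀ := lintegral_const_mul _ (by fun_prop)

lemma tendsto_rMu_zero (ht₀ : 0 < t₀) (hfin : rMu μ t₀ x₀ ≠ ⊤) {x : ℝ}
    (hx : ∀ᵐ θ ∂μ, θ * (2 * x - θ) < 0) :
    Tendsto (fun t => rMu μ t x) (𝓝[>] 0) (𝓝 0) := by
  have hdom : rMu μ (t₀ / 2) x ≠ ⊤ := rMu_ne_top_of_lt (half_pos ht₀) (half_lt_self ht₀) hfin x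
  rw [← lintegral_zero (μ := μ)]
  refine tendsto_lintegral_filter_of_dominated_convergence _
    (.of_forall fun t => by fun_prop) ?_ hdom ?_
  · filter_upwards [Ioc_mem_nhdsGT (half_pos ht₀)] with t ht
    filter_upwards [hx] with θ hθ
    exact ENNReal.ofReal_le_ofReal (rTheta_le_of_le_of_nonpos ht.1 ht.2 hθ.le)
  · filter_upwards [hx] with θ hθ
    simpa only [ENNReal.ofReal_zero] using ENNReal.tendsto_ofReal (tendsto_rTheta_zero hθ)

-- The bound `y ≤ exp y` on the exponent suffices, and `ENNReal.ofReal` discards the `θ` where the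
-- exponent is negative.
lemma ofReal_inv_mul_lintegral_le_rMu (ht : 0 < t) (x : ℝ) :
    ENNReal.ofReal t⁻¹ * ∫⁻ θ, ENNReal.ofReal (θ * (2 * x - θ) / 2) ∂μ ≤ rMu μ t x := by
  rw [← lintegral_const_mul _ (by fun_prop)]
  refine lintegral_mono fun θ => ?_
  rw [← ENNReal.ofReal_mul (inv_pos.2 ht).le, rTheta_eq_exp, mul_comm]
  exact ENNReal.ofReal_le_ofReal (by linarith [Real.add_one_le_exp (θ * (2 * x - θ) / 2 * t⁻¹)])

lemma tendsto_rMu_top {x : ℝ} (hx : ∃ᵐ θ ∂μ, 0 < θ * (2 * x - θ)) :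
    Tendsto (fun t => rMu μ t x) (𝓝[>] 0) (𝓝 ⊤) := by
  have hpos : ∫⁻ θ, ENNReal.ofReal (θ * (2 * x - θ) / 2) ∂μ ≠ 0 := by
    rw [Ne, lintegral_eq_zero_iff (by fun_prop)]
    refine fun hzero => hx (hzero.mono fun θ hθ => ?_)
    linarith [ENNReal.ofReal_eq_zero.1 hθ]
  have hlower := ENNReal.Tendsto.mul_const (b := ∫⁻ θ, ENNReal.ofReal (θ * (2 * x - θ) / 2) ∂μ)
    (ENNReal.tendsto_ofReal_atTop.comp tendsto_inv_nhdsGT_zero) (.inl ENNReal.top_ne_zero)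
  rw [ENNReal.top_mul hpos] at hlower
  exact tendsto_nhds_top_mono hlower
    (eventually_mem_nhdsWithin.mono fun t ht => ofReal_inv_mul_lintegral_le_rMu ht x)

end rMu

lemma isCoboundedUnder_ge_id_ae {μ : Measure ℝ} (hμ : μ ≠ 0) :
    (ae μ).IsCoboundedUnder (· ≥ ·) id := by
  obtain ⟨n, hn⟩ := exists_pos_ball (0 : ℝ) hμ
  refine .of_frequently_le (a := (n : ℝ)) ?_
  refine (frequently_ae_mem_iff.2 hn.ne').mono fun θ hθ => ?_
  rw [Real.ball_eq_Ioo] at hθ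
  simpa using hθ.2.le

lemma sInf_measure_Ioc_pos_eq_essInf {μ : Measure ℝ} (hμ : μ ≠ 0) {m : ℝ}
    (hm : ∀ᵐ θ ∂μ, m < θ) : sInf {θ : ℝ | m < θ ∧ 0 < μ (Ioc m θ)} = essInf id μ := by
  have hmem : ∀ a, essInf id μ < a → a ∈ {θ : ℝ | m < θ ∧ 0 < μ (Ioc m θ)} := fun a ha => by
    have hfreq : ∃ᵐ θ ∂μ, θ ∈ Ioc m a :=
      ((frequently_lt_of_liminf_lt (isCoboundedUnder_ge_id_ae hμ) ha).and_eventually hm).mono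
        fun θ hθ => ⟨hθ.2, hθ.1.le⟩
    obtain ⟨θ, hθ⟩ := hfreq.exists
    exact ⟨hθ.1.trans_le hθ.2, pos_iff_ne_zero.2 (frequently_ae_mem_iff.1 hfreq)⟩
  refine csInf_eq_of_forall_ge_of_forall_gt_exists_lt ⟨_, hmem _ (lt_add_one _)⟩ ?_ ?_
  · rintro a ⟨-, ha⟩
    have hbdd : (ae μ).IsBoundedUnder (· ≥ ·) id := ⟨m, hm.mono fun _ => le_of_lt⟩
    obtain ⟨θ, hθ, hle⟩ :=
      ((frequently_ae_mem_iff.2 ha.ne').and_eventually (ae_essInf_le hbdd)).exists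
    exact hle.trans hθ.2
  · intro a ha
    obtain ⟨c, hc, hca⟩ := exists_between ha
    exact ⟨c, hmem c hc, hca⟩

lemma tendsto_rMu_zero_of_two_mul_lt_essInf {μ : Measure ℝ} (hpos : ∀ᵐ θ ∂μ, 0 < θ)
    {t₀ x₀ : ℝ} (ht₀ : 0 < t₀) (hfin : rMu μ t₀ x₀ ≠ ⊤) {x : ℝ} (hx : 2 * x < essInf id μ) :
    Tendsto (fun t => rMu μ t x) (𝓝[>] 0) (𝓝 0) := by
  have hbdd : (ae μ).IsBoundedUnder (· ≥ ·) id := ⟨0, hpos.mono fun _ => le_of_lt⟩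
  refine tendsto_rMu_zero ht₀ hfin ?_
  filter_upwards [hpos, ae_essInf_le hbdd] with θ hθ hle
  exact mul_neg_of_pos_of_neg hθ (sub_neg.2 (hx.trans_le hle))

lemma tendsto_rMu_top_of_essInf_lt_two_mul {μ : Measure ℝ} (hμ : μ ≠ 0)
    (hpos : ∀ᵐ θ ∂μ, 0 < θ) {x : ℝ} (hx : essInf id μ < 2 * x) :
    Tendsto (fun t => rMu μ t x) (𝓝[>] 0) (𝓝 ⊤) := by
  have hfreq : ∃ᵐ θ ∂μ, θ < 2 * x :=
    frequently_lt_of_liminf_lt (isCoboundedUnder_ge_id_ae hμ) hx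
  exact tendsto_rMu_top <|
    (hfreq.and_eventually hpos).mono fun θ hθ => mul_pos hθ.2 (sub_pos.2 hθ.1)

theorem stmt_2_general (μ : Measure ℝ) (hsupp : μ (Ioi (0 : ℝ))ᶜ = 0) {ℓ : ℝ≥0∞} (hℓ₀ : ℓ ≠ 0)
    (hℓ : ℓ ≠ ⊤) (b : ℝ → ℝ) (hb : ∀ᶠ t in 𝓝[>] 0, rMu μ t (b t) = ℓ) :
    Tendsto b (𝓝[>] 0) (𝓝 (sInf {θ : ℝ | 0 < θ ∧ 0 < μ (Ioc 0 θ)} / 2)) := by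
  have hpos : ∀ᵐ θ ∂μ, 0 < θ := hsupp
  obtain ⟨t₀, hbt₀, ht₀⟩ := (hb.and eventually_mem_nhdsWithin).exists
  have hμ : μ ≠ 0 := by
    rintro rfl
    exact hℓ₀ (hbt₀ ▸ lintegral_zero_measure _)
  rw [sInf_measure_Ioc_pos_eq_essInf hμ hpos]
  refine tendsto_order.2 ⟨fun c hc => ?_, fun c hc => ?_⟩
  · have hlim : Tendsto (fun t => rMu μ t c) (𝓝[>] 0) (𝓝 0) :=
      tendsto_rMu_zero_of_two_mul_lt_essInf hpos ht₀ (hbt₀ ▸ hℓ) (by linarith)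
    filter_upwards [hb, hlim.eventually_lt_const hℓ₀.bot_lt, self_mem_nhdsWithin] with t hbt hlt ht
    exact (rMu_mono hpos (le_of_lt ht)).reflect_lt (hbt ▸ hlt)
  · have hlim : Tendsto (fun t => rMu μ t c) (𝓝[>] 0) (𝓝 ⊤) :=
      tendsto_rMu_top_of_essInf_lt_two_mul hμ hpos (by linarith)
    filter_upwards [hb, hlim.eventually_const_lt hℓ.lt_top, self_mem_nhdsWithin] with t hbt hlt ht
    exact (rMu_mono hpos (le_of_lt ht)).reflect_lt (hbt ▸ hlt)

theorem stmt_2 (μ : Measure ℝ) [SigmaFinite μ] (hμne : μ ≠ 0)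
    (hsupp : μ (Set.Ioi (0 : ℝ))ᶜ = 0)
    (hint : ∀ ε : ℝ, 0 < ε →
      (∫⁻ θ, ENNReal.ofReal (Real.exp (-(ε * θ ^ 2) / 2)) ∂μ) < ⊤)
    (b : ℝ → ℝ)
    (hb : ∀ t ∈ Set.Ioi (0 : ℝ), rMu μ t (b t) = 1) :
    Tendsto b (nhdsWithin 0 (Set.Ioi 0))
      (𝓝 (sInf {θ : ℝ | 0 < θ ∧ 0 < μ (Set.Ioc 0 θ)} / 2)) :=
  stmt_2_general μ hsupp one_ne_zero ENNReal.one_ne_top b (eventually_mem_nhdsWithin.mono hb)
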